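/- Relative entropy of morphisms in FinStat is functorial. Precisely: let X, Y, Z be finite sets, let f : X → Y and g : Y → Z be functions (identified with their pure channels), let s : Y ⇝ X be a stochastic section of f and t : Z ⇝ Y a stochastic section of g, and let p be a probability distribution on X. Then, as an identity in [0,∞], D( p, (s∘t)∘((g∘f)∘p) ) = D( p, s∘(f∘p) ) + D( f∘p, t∘(g∘(f∘p)) ). -/

import Mathlib

open scoped ENNReal BigOperators

/-- A probability distribution on a finite set `X`. -/
def IsDist {X : Type*} [Fintype X] (p : X → ℝ) : Prop :=
  (∀ x, 0 ≤ p x) ∧ ∑ x, p x = 1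

/-- A channel from `X` to `Y`; `f y x` is the probability of output `y` given input `x`. -/
def IsChannel {X Y : Type*} [Fintype Y] (f : Y → X → ℝ) : Prop :=
  (∀ y x, 0 ≤ f y x) ∧ ∀ x, ∑ y, f y x = 1

/-- Composite of channels: `(g ∘ f) z x = ∑ y, g z y * f y x`. -/
noncomputable def chComp {X Y Z : Type*} [Fintype Y]
    (g : Z → Y → ℝ) (f : Y → X → ℝ) : Z → X → ℝ :=
  fun z x => ∑ y, g z y * f y x

/-- The pure (deterministic) channel associated to a function. -/
def pureCh {X Y : Type*} [DecidableEq Y] (φ : X → Y) : Y → X → ℝ :=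
  fun y x => if y = φ x then 1 else 0

/-- Pushforward of a distribution along a channel. -/
noncomputable def push {X Y : Type*} [Fintype X] (f : Y → X → ℝ) (p : X → ℝ) : Y → ℝ :=
  fun y => ∑ x, f y x * p x

/-- The identity channel. -/
def idChan {X : Type*} [DecidableEq X] : X → X → ℝ :=
  fun x x' => if x = x' then 1 else 0

/-- `s : Y ⇝ X` is a stochastic section of `φ : X → Y` if it is a channel and `φ ∘ s = id_Y`. -/
def IsSection {X Y : Type*} [Fintype X] [Fintype Y] [DecidableEq Y]
    (φ : X → Y) (s : X → Y → ℝ) : Prop :=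
  IsChannel s ∧ chComp (pureCh φ) s = idChan

open scoped Classical in
/-- Relative entropy `D(p,q) ∈ [0,∞]`, with the conventions `0·log(0/q) = 0` and
`p·log(p/0) = ∞` for `p ≠ 0`. -/
noncomputable def relEnt {X : Type*} [Fintype X] (p q : X → ℝ) : ℝ≥0∞ :=
  if ∀ x, p x ≠ 0 → q x ≠ 0 then
    ENNReal.ofReal (∑ x, if p x = 0 then 0 else p x * Real.log (p x / q x))
  else ⊤

/-!
Let `q` be the image of `p` under `f`. A section `s` of `f` is supported on the graph of `f`, so
that `(s ∘ r) x = s x (f x) * r (f x)` for every measure `r` on `Y`. In the quotient of `s ∘ r` by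
`s ∘ q` the factor `s x (f x)` cancels, and the logarithm gives
`log (p x / (s ∘ r) x) = log (p x / (s ∘ q) x) + log (q (f x) / r (f x))`.
Averaging over `p` yields the chain rule `D(p, s ∘ r) = D(p, s ∘ q) + D(q, r)`, where the last term
is an average over `q = f ∘ p`. Gibbs' inequality makes the two summands nonnegative, so the
identity holds in `[0, ∞]`, infinite values being matched by comparing supports. Functoriality is
the case `r = t ∘ (g ∘ q)`.
-/

open Function (support)

section Push

variable {X Y Z : Type*} [Fintype X]

theorem push_chComp [Fintype Y] (k : Z → Y → ℝ) (l : Y → X → ℝ) (p : X → ℝ) :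
    push (chComp k l) p = push k (push l p) := by
  funext z
  simp only [push, chComp, Finset.sum_mul, Finset.mul_sum, mul_assoc]
  exact Finset.sum_comm

theorem push_nonneg {k : Y → X → ℝ} {p : X → ℝ} (hk : ∀ y x, 0 ≤ k y x) (hp : ∀ x, 0 ≤ p x)
    (y : Y) : 0 ≤ push k p y :=
  Finset.sum_nonneg fun x _ => mul_nonneg (hk y x) (hp x)

theorem sum_push [Fintype Y] {k : Y → X → ℝ} (hk : ∀ x, ∑ y, k y x = 1) (p : X → ℝ) :
    ∑ y, push k p y = ∑ x, p x := by
  simp only [push]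
  rw [Finset.sum_comm]
  simp only [← Finset.sum_mul, hk, one_mul]

theorem IsDist.push [Fintype Y] {k : Y → X → ℝ} {p : X → ℝ} (hp : IsDist p) (hk : IsChannel k) :
    IsDist (push k p) :=
  ⟨push_nonneg hk.1 hp.1, (sum_push hk.2 p).trans hp.2⟩

end Push

section PureChannel

variable {X Y Z : Type*} [DecidableEq Y]

theorem isChannel_pureCh [Fintype Y] (f : X → Y) : IsChannel (pureCh f) :=
  ⟨fun y x => by unfold pureCh; split_ifs <;> norm_num, fun x => by simp [pureCh]⟩

theorem pureCh_comp [Fintype Y] [DecidableEq Z] (g : Y → Z) (f : X → Y) :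
    pureCh (g ∘ f) = chComp (pureCh g) (pureCh f) := by
  funext z x
  simp [pureCh, chComp]

theorem push_pureCh_apply [Fintype X] (f : X → Y) (p : X → ℝ) (y : Y) :
    push (pureCh f) p y = ∑ x with f x = y, p x := by
  simp [push, pureCh, Finset.sum_filter, eq_comm]

theorem sum_push_pureCh_mul [Fintype X] [Fintype Y] (f : X → Y) (p : X → ℝ) (F : Y → ℝ) :
    ∑ y, push (pureCh f) p y * F y = ∑ x, p x * F (f x) := by
  simp only [push, Finset.sum_mul]
  rw [Finset.sum_comm]
  simp [pureCh]

theorem support_push_pureCh [Fintype X] (f : X → Y) {p : X → ℝ} (hp : ∀ x, 0 ≤ p x) :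
    support (push (pureCh f) p) = f '' support p := by
  ext y
  rw [Function.mem_support, push_pureCh_apply, Ne,
    Finset.sum_eq_zero_iff_of_nonneg fun x _ => hp x]
  simp [and_comm]

end PureChannel

section Section

variable {X Y : Type*} [Fintype X] [Fintype Y] [DecidableEq Y] {f : X → Y} {s : X → Y → ℝ}

theorem IsSection.apply_eq_zero (hs : IsSection f s) {x : X} {y : Y} (hxy : f x ≠ y) :
    s x y = 0 := by
  have fiber_sum : ∑ x' with f x' = f x, s x' y = 0 := by
    have := congrFun (congrFun hs.2 (f x)) y
    simpa [chComp, pureCh, idChan, hxy, Finset.sum_filter, eq_comm] using this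
  exact (Finset.sum_eq_zero_iff_of_nonneg fun x' _ => hs.1.1 x' y).1 fiber_sum x (by simp)

theorem IsSection.push_apply (hs : IsSection f s) (r : Y → ℝ) (x : X) :
    push s r x = s x (f x) * r (f x) :=
  Finset.sum_eq_single (f x) (fun y _ hy => by rw [hs.apply_eq_zero hy.symm, zero_mul]) (by simp)

theorem IsSection.support_push (hs : IsSection f s) (r : Y → ℝ) :
    support (push s r) = {x | s x (f x) ≠ 0} ∩ f ⁻¹' support r := by
  ext x
  simp [hs.push_apply]

theorem IsSection.support_subset_support_push_iff (hs : IsSection f s) {p : X → ℝ}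
    (hp : ∀ x, 0 ≤ p x) (r : Y → ℝ) :
    support p ⊆ support (push s r) ↔
      support p ⊆ support (push s (push (pureCh f) p)) ∧
        support (push (pureCh f) p) ⊆ support r := by
  simp only [hs.support_push, support_push_pureCh f hp, Set.subset_inter_iff, Set.image_subset_iff,
    Set.subset_preimage_image, and_true]

end Section

section RelEnt

variable {X Y : Type*} [Fintype X] {p q : X → ℝ}

theorem relEnt_of_support_subset (h : support p ⊆ support q) :
    relEnt p q = ENNReal.ofReal (∑ x, p x * Real.log (p x / q x)) := by
  refine (if_pos h).trans ?_
  congr! 2 with x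
  simp +contextual

theorem relEnt_of_not_support_subset (h : ¬ support p ⊆ support q) : relEnt p q = ⊤ :=
  if_neg h

theorem sub_le_mul_log_div {a b : ℝ} (ha : 0 ≤ a) (hb : 0 ≤ b) (hab : a ≠ 0 → b ≠ 0) :
    a - b ≤ a * Real.log (a / b) := by
  rcases ha.eq_or_lt with rfl | ha
  · simpa using hb
  have hb : 0 < b := hb.lt_of_ne' (hab ha.ne')
  calc
    a - b = a * (1 - (a / b)⁻¹) := by field_simp
    _ ≤ a * Real.log (a / b) := by
      gcongr
      exact Real.one_sub_inv_le_log_of_pos (div_pos ha hb)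

theorem sum_mul_log_div_nonneg (hp : ∀ x, 0 ≤ p x) (hq : ∀ x, 0 ≤ q x)
    (hqp : ∑ x, q x ≤ ∑ x, p x) (h : support p ⊆ support q) :
    0 ≤ ∑ x, p x * Real.log (p x / q x) :=
  calc
    0 ≤ ∑ x, (p x - q x) := by rwa [Finset.sum_sub_distrib, sub_nonneg]
    _ ≤ ∑ x, p x * Real.log (p x / q x) :=
      Finset.sum_le_sum fun x _ => sub_le_mul_log_div (hp x) (hq x) (@h x)

variable [Fintype Y] [DecidableEq Y] {f : X → Y} {s : X → Y → ℝ}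

theorem IsSection.sum_mul_log_div_push (hs : IsSection f s) (hp : ∀ x, 0 ≤ p x) {r : Y → ℝ}
    (h : support p ⊆ support (push s r)) :
    ∑ x, p x * Real.log (p x / push s r x) =
      ∑ x, p x * Real.log (p x / push s (push (pureCh f) p) x) +
        ∑ y, push (pureCh f) p y * Real.log (push (pureCh f) p y / r y) := by
  rw [sum_push_pureCh_mul f p fun y => Real.log (push (pureCh f) p y / r y),
    ← Finset.sum_add_distrib]
  refine Finset.sum_congr rfl fun x _ => ?_
  by_cases hx : p x = 0
  · simp [hx]
  have hfx : push (pureCh f) p (f x) ≠ 0 :=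
    (support_push_pureCh f hp).superset (Set.mem_image_of_mem f hx)
  obtain ⟨hsx, hrx⟩ : s x (f x) ≠ 0 ∧ r (f x) ≠ 0 := by
    simpa [hs.push_apply] using h hx
  rw [hs.push_apply, hs.push_apply, ← mul_add,
    ← Real.log_mul (div_ne_zero hx (mul_ne_zero hsx hfx)) (div_ne_zero hfx hrx)]
  congr 2
  field_simp

end RelEnt

theorem relEnt_FinStat_functorial_general {X Y : Type*} [Fintype X] [Fintype Y] [DecidableEq Y]
    (f : X → Y) (s : X → Y → ℝ) (p : X → ℝ) (r : Y → ℝ) (hs : IsSection f s)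
    (hp : ∀ x, 0 ≤ p x) (hr : ∀ y, 0 ≤ r y) (hrp : ∑ y, r y ≤ ∑ x, p x) :
    relEnt p (push s r) =
      relEnt p (push s (push (pureCh f) p)) + relEnt (push (pureCh f) p) r := by
  have support_iff := hs.support_subset_support_push_iff hp r
  by_cases h_left : support p ⊆ support (push s (push (pureCh f) p))
  · by_cases h_right : support (push (pureCh f) p) ⊆ support r
    · have h := support_iff.2 ⟨h_left, h_right⟩
      have hf := isChannel_pureCh f
      have hq := push_nonneg hf.1 hp
      have left_nonneg := sum_mul_log_div_nonneg hp (push_nonneg hs.1.1 hq)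
        (by rw [sum_push hs.1.2, sum_push hf.2]) h_left
      have right_nonneg := sum_mul_log_div_nonneg hq hr (by rwa [sum_push hf.2]) h_right
      rw [relEnt_of_support_subset h, relEnt_of_support_subset h_left,
        relEnt_of_support_subset h_right, ← ENNReal.ofReal_add left_nonneg right_nonneg,
        hs.sum_mul_log_div_push hp h]
    · rw [relEnt_of_not_support_subset h_right, add_top,
        relEnt_of_not_support_subset fun h => h_right (support_iff.1 h).2]
  · rw [relEnt_of_not_support_subset h_left, top_add,
      relEnt_of_not_support_subset fun h => h_left (support_iff.1 h).1]

/-- Relative entropy of morphisms in FinStat is functorial. -/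
theorem relEnt_FinStat_functorial {X Y Z : Type*}
    [Fintype X] [Fintype Y] [Fintype Z] [DecidableEq Y] [DecidableEq Z]
    (f : X → Y) (g : Y → Z) (s : X → Y → ℝ) (t : Y → Z → ℝ) (p : X → ℝ)
    (hs : IsSection f s) (ht : IsSection g t) (hp : IsDist p) :
    relEnt p (push (chComp s t) (push (pureCh (g ∘ f)) p))
      = relEnt p (push s (push (pureCh f) p))
        + relEnt (push (pureCh f) p)
            (push t (push (pureCh g) (push (pureCh f) p))) := by
  have hr := ((hp.push (isChannel_pureCh f)).push (isChannel_pureCh g)).push ht.1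
  rw [push_chComp, pureCh_comp, push_chComp]
  exact relEnt_FinStat_functorial_general f s p _ hs hp.1 hr.1 (hr.2.trans hp.2.symm).le
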